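/- Let c be a real number, let G' be an identifiable graph on n₀ vertices with maximum degree Δ₀ ≥ 2, and suppose γ^ID(G') ≤ ((Δ₀−1)/Δ₀)·n₀ + c. Let Δ₁ ≥ 3 be an integer, let v be a vertex of G', and let G be the graph obtained from G' by adding Δ₁ new vertices u, l_1, …, l_{Δ₁−1} together with the edge vu and the edges ul_i (1 ≤ i ≤ Δ₁−1). Then, with M = max(Δ₀, Δ₁), one has γ^ID(G) ≤ ((M−1)/M)·(n₀ + Δ₁) + c. -/

import Mathlib

open SimpleGraph

/-- The closed neighborhood `N[v]` of a vertex `v` in `G`. -/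
def closedNbhd {V : Type*} (G : SimpleGraph V) (v : V) : Set V :=
  insert v (G.neighborSet v)

/-- `C` is an identifying code of `G`: it dominates every vertex and the
closed neighborhoods of distinct vertices intersect `C` differently. -/
def IsIDCode {V : Type*} (G : SimpleGraph V) (C : Set V) : Prop :=
  (∀ v, (closedNbhd G v ∩ C).Nonempty) ∧
  ∀ u w : V, u ≠ w → closedNbhd G u ∩ C ≠ closedNbhd G w ∩ C

/-- The identification number `γ^ID(G)`: the minimum size of an identifying code. -/
noncomputable def idNum {V : Type*} [Fintype V] (G : SimpleGraph V) : ℕ :=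
  sInf {k | ∃ C : Set V, C.ncard = k ∧ IsIDCode G C}

/-- `G` is identifiable (closed-twin-free). -/
def Identifiable {V : Type*} (G : SimpleGraph V) : Prop :=
  ∀ u w : V, u ≠ w → closedNbhd G u ≠ closedNbhd G w

/-- The maximum degree of a finite graph `G`. -/
noncomputable def maxDeg {V : Type*} [Fintype V] (G : SimpleGraph V) : ℕ :=
  Finset.univ.sup fun v => (G.neighborSet v).ncard

/-- `S` is a dominating set of `G`. -/
def IsDomSet {V : Type*} (G : SimpleGraph V) (S : Set V) : Prop :=
  ∀ v, (closedNbhd G v ∩ S).Nonempty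

/-- The domination number `γ(G)`. -/
noncomputable def domNum {V : Type*} [Fintype V] (G : SimpleGraph V) : ℕ :=
  sInf {k | ∃ S : Set V, S.ncard = k ∧ IsDomSet G S}

/-- The star `K_{1,k}`: vertex `0` is adjacent to each of the `k` other vertices. -/
def starGraph (k : ℕ) : SimpleGraph (Fin (k + 1)) :=
  SimpleGraph.fromRel fun a _ => a = 0

/-- The graph obtained from `G'` by appending a star with `k` extra leaves onto the
vertex `v`: we add a new universal vertex `u = Sum.inr none` adjacent to `v`,
and `k` new leaves `Sum.inr (some i)` adjacent to `u` (so the star has `k + 1`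
leaves in total, one of which is identified with `v`, i.e. a `(k+1)`-star is
appended by one of its leaves onto `v`). -/
def appendStar {V : Type*} (G' : SimpleGraph V) (v : V) (k : ℕ) :
    SimpleGraph (V ⊕ Option (Fin k)) :=
  SimpleGraph.fromRel fun a b =>
    (∃ x y, a = Sum.inl x ∧ b = Sum.inl y ∧ G'.Adj x y) ∨
    (a = Sum.inl v ∧ b = Sum.inr none) ∨
    (∃ i, a = Sum.inr none ∧ b = Sum.inr (some i))

/-! The leaves of the appended star, added to an identifying code of `G'`, give an identifying code
of the new graph as soon as there are at least two of them: old vertices see no leaf, each leaf sees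
only itself, and the center of the star sees all leaves, while two old vertices are still separated
by the old code. Hence appending a `Δ₁`-star raises `γ^ID` by at most
`Δ₁ - 1 = (Δ₁ - 1) / Δ₁ * Δ₁`, and it remains to use that `x ↦ (x - 1) / x` is monotone. -/

section Codes

variable {V : Type*} {G : SimpleGraph V}

lemma mem_closedNbhd {x y : V} : y ∈ closedNbhd G x ↔ y = x ∨ G.Adj x y :=
  Iff.rfl

lemma Identifiable.isIDCode_univ (hG : Identifiable G) : IsIDCode G Set.univ :=
  ⟨fun x => ⟨x, mem_closedNbhd.2 (.inl rfl), Set.mem_univ x⟩, fun x y hxy => by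
    simpa only [Set.inter_univ] using hG x y hxy⟩

variable [Fintype V]

lemma IsIDCode.idNum_le_ncard {C : Set V} (hC : IsIDCode G C) : idNum G ≤ C.ncard :=
  Nat.sInf_le ⟨C, rfl, hC⟩

lemma Identifiable.exists_isIDCode_ncard_eq_idNum (hG : Identifiable G) :
    ∃ C : Set V, C.ncard = idNum G ∧ IsIDCode G C :=
  Nat.sInf_mem (s := {k | ∃ C : Set V, C.ncard = k ∧ IsIDCode G C})
    ⟨_, Set.univ, rfl, hG.isIDCode_univ⟩

end Codes

section AppendStar

variable {V : Type*} {G : SimpleGraph V} {v : V} {k : ℕ}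

@[simp]
lemma appendStar_adj_inl_inl {x y : V} :
    (appendStar G v k).Adj (.inl x) (.inl y) ↔ G.Adj x y := by
  simpa [appendStar, G.adj_comm y x] using G.ne_of_adj

@[simp]
lemma not_appendStar_adj_inl_leaf {x : V} {i : Fin k} :
    ¬(appendStar G v k).Adj (.inl x) (.inr (some i)) := by
  simp [appendStar]

@[simp]
lemma appendStar_adj_center_leaf {i : Fin k} :
    (appendStar G v k).Adj (.inr none) (.inr (some i)) := by
  simp [appendStar]

@[simp]
lemma not_appendStar_adj_leaf_leaf {i j : Fin k} :
    ¬(appendStar G v k).Adj (.inr (some i)) (.inr (some j)) := by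
  simp [appendStar]

/-- A set `C` of vertices of the original graph together with all `k` new leaves of the appended
star; this is the candidate code of the extended graph. -/
def addLeaves (C : Set V) (k : ℕ) : Set (V ⊕ Option (Fin k)) :=
  Sum.inl '' C ∪ Sum.inr '' Set.range some

lemma ncard_addLeaves {C : Set V} (hC : C.Finite) (k : ℕ) :
    (addLeaves C k).ncard = C.ncard + k := by
  rw [addLeaves, Set.ncard_union_eq Set.disjoint_image_inl_image_inr (hC.image _)
    (Set.toFinite _), Set.ncard_image_of_injective _ Sum.inl_injective,
    Set.ncard_image_of_injective _ Sum.inr_injective,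
    Set.ncard_range_of_injective (Option.some_injective _), Nat.card_fin]

variable (G v k) (C : Set V)

lemma preimage_inl_closedNbhd_inl_inter_addLeaves (x : V) :
    Sum.inl ⁻¹' (closedNbhd (appendStar G v k) (.inl x) ∩ addLeaves C k) =
      closedNbhd G x ∩ C := by
  ext y
  simp [mem_closedNbhd, addLeaves]

lemma preimage_inr_closedNbhd_inl_inter_addLeaves (x : V) :
    Sum.inr ⁻¹' (closedNbhd (appendStar G v k) (.inl x) ∩ addLeaves C k) = ∅ := by
  ext (_ | i) <;> simp [mem_closedNbhd, addLeaves]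

-- Only the part among the new vertices is determined: the center also sees `v` when `v ∈ C`.
lemma preimage_inr_closedNbhd_center_inter_addLeaves :
    Sum.inr ⁻¹' (closedNbhd (appendStar G v k) (.inr none) ∩ addLeaves C k) =
      Set.range some := by
  ext (_ | i) <;> simp [mem_closedNbhd, addLeaves]

lemma preimage_inr_closedNbhd_leaf_inter_addLeaves (i : Fin k) :
    Sum.inr ⁻¹' (closedNbhd (appendStar G v k) (.inr (some i)) ∩ addLeaves C k) =
      {some i} := by
  ext (_ | j) <;> simp [mem_closedNbhd, addLeaves]

variable {G k C}

theorem isIDCode_addLeaves (hC : IsIDCode G C) (hk : 2 ≤ k) :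
    IsIDCode (appendStar G v k) (addLeaves C k) := by
  have : Nontrivial (Fin k) := Fin.nontrivial_iff_two_le.2 hk
  have range_nonempty : (Set.range (some : Fin k → _)).Nonempty := Set.range_nonempty _
  have range_nontrivial : (Set.range (some : Fin k → _)).Nontrivial :=
    Set.image_univ ▸ Set.nontrivial_univ.image (Option.some_injective _)
  constructor
  · rintro (x | _ | i)
    · apply Set.nonempty_of_nonempty_preimage (f := Sum.inl)
      simpa only [preimage_inl_closedNbhd_inl_inter_addLeaves] using hC.1 x
    · apply Set.nonempty_of_nonempty_preimage (f := Sum.inr)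
      simpa only [preimage_inr_closedNbhd_center_inter_addLeaves] using range_nonempty
    · apply Set.nonempty_of_nonempty_preimage (f := Sum.inr)
      simpa only [preimage_inr_closedNbhd_leaf_inter_addLeaves] using Set.singleton_nonempty _
  · intro a b hab heq
    have heq_inl := congrArg (Sum.inl ⁻¹' ·) heq
    have heq_inr := congrArg (Sum.inr ⁻¹' ·) heq
    rcases a with x | _ | i <;> rcases b with y | _ | j <;>
      simp only [preimage_inl_closedNbhd_inl_inter_addLeaves,
        preimage_inr_closedNbhd_inl_inter_addLeaves,
        preimage_inr_closedNbhd_center_inter_addLeaves,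
        preimage_inr_closedNbhd_leaf_inter_addLeaves] at heq_inl heq_inr
    · exact hC.2 x y (fun hxy => hab (congrArg Sum.inl hxy)) heq_inl
    · exact range_nonempty.ne_empty heq_inr.symm
    · exact Set.singleton_ne_empty _ heq_inr.symm
    · exact range_nonempty.ne_empty heq_inr
    · exact hab rfl
    · exact range_nontrivial.ne_singleton heq_inr
    · exact Set.singleton_ne_empty _ heq_inr
    · exact range_nontrivial.ne_singleton heq_inr.symm
    · exact hab (congrArg Sum.inr (Set.singleton_injective heq_inr))

theorem idNum_appendStar_le [Fintype V] (hG : Identifiable G) (hk : 2 ≤ k) :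
    idNum (appendStar G v k) ≤ idNum G + k := by
  obtain ⟨C, hcard, hC⟩ := hG.exists_isIDCode_ncard_eq_idNum
  calc
    idNum (appendStar G v k) ≤ (addLeaves C k).ncard :=
      (isIDCode_addLeaves v hC hk).idNum_le_ncard
    _ = idNum G + k := by rw [ncard_addLeaves C.toFinite, hcard]

end AppendStar

lemma sub_one_div_le_sub_one_div {K : Type*} [Field K] [LinearOrder K] [IsStrictOrderedRing K]
    {a b : K} (ha : 0 < a) (hab : a ≤ b) : (a - 1) / a ≤ (b - 1) / b := by
  rw [sub_div, sub_div, div_self ha.ne', div_self (ha.trans_le hab).ne']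
  gcongr

/-- if an identifiable graph `G'` of order `n₀` and maximum degree
`Δ₀ ≥ 2` satisfies `γ^ID(G') ≤ ((Δ₀−1)/Δ₀)·n₀ + c`, then the graph obtained by
appending a `Δ₁`-star (`Δ₁ ≥ 3`) by a leaf onto a vertex `v` of `G'` satisfies
`γ^ID(G) ≤ ((M−1)/M)·(n₀+Δ₁) + c` where `M = max(Δ₀, Δ₁)`. -/
theorem stmt_6 {V : Type*} [Fintype V] (c : ℝ) (G' : SimpleGraph V)
    (hG' : Identifiable G') (Δ₀ : ℕ) (hΔ₀ : 2 ≤ Δ₀) (hmax : maxDeg G' = Δ₀)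
    (hbound : (idNum G' : ℝ) ≤ ((Δ₀ : ℝ) - 1) / Δ₀ * (Fintype.card V) + c)
    (Δ₁ : ℕ) (hΔ₁ : 3 ≤ Δ₁) (v : V) :
    (idNum (appendStar G' v (Δ₁ - 1)) : ℝ) ≤
      ((max Δ₀ Δ₁ : ℕ) - 1 : ℝ) / ((max Δ₀ Δ₁ : ℕ) : ℝ) *
        ((Fintype.card V : ℝ) + (Δ₁ : ℝ)) + c := by
  set M : ℝ := ((max Δ₀ Δ₁ : ℕ) : ℝ)
  have hΔ₀_pos : (0 : ℝ) < Δ₀ := by positivity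
  have hΔ₁_pos : (0 : ℝ) < Δ₁ := by positivity
  have hΔ₀_le : (Δ₀ : ℝ) ≤ M := Nat.cast_le.2 (le_max_left _ _)
  have hΔ₁_le : (Δ₁ : ℝ) ≤ M := Nat.cast_le.2 (le_max_right _ _)
  calc
    (idNum (appendStar G' v (Δ₁ - 1)) : ℝ) ≤ idNum G' + (Δ₁ - 1 : ℕ) :=
      mod_cast idNum_appendStar_le v hG' (by lia)
    _ = idNum G' + (Δ₁ - 1 : ℝ) / Δ₁ * Δ₁ := by
      rw [div_mul_cancel₀ _ hΔ₁_pos.ne', Nat.cast_pred (by lia)]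
    _ ≤ (Δ₀ - 1 : ℝ) / Δ₀ * Fintype.card V + c + (Δ₁ - 1 : ℝ) / Δ₁ * Δ₁ := by gcongr
    _ ≤ (M - 1) / M * Fintype.card V + c + (M - 1) / M * Δ₁ := by
      gcongr ?_ * _ + _ + ?_ * _
      · exact sub_one_div_le_sub_one_div hΔ₀_pos hΔ₀_le
      · exact sub_one_div_le_sub_one_div hΔ₁_pos hΔ₁_le
    _ = (M - 1) / M * (Fintype.card V + Δ₁) + c := by ring
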